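/- arXiv:1706.02094 — 2 statements merged into one kernel-verified Lean document; each statement's English description precedes it below -/
import Mathlib

section
/- Let 𝒰 be a locally finite good open cover of a topological space Y. Let P be a finite simplicial complex in ℝⁿ, let L be a subcomplex of P (a simplicial complex whose set of faces is contained in that of P), and set D = |L| ∪ P⁰, where P⁰ ⊆ ℝⁿ is the set of vertices of P. Let f : D → Y be a continuous map which is (𝒰,P)-small, i.e., for every face s of P there is U ∈ 𝒰 with f(convexHull(s) ∩ D) ⊆ U. Then f extends to a continuous map f' : |P| → Y which is (𝒰,P)-small and which moreover satisfies: for every U ∈ 𝒰 and every face s of P, if f(convexHull(s) ∩ D) ⊆ U then f'(convexHull(s)) ⊆ U. -/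
open Set Geometry

/-- A map `f` defined on a subset `D` of `ℝⁿ` is `(𝒰,P)`-small if for every face `s` of `P`
the image of `convexHull ℝ s ∩ D` under `f` is contained in some member of `𝒰`. -/
def IsSmallMap {n : ℕ} {Y : Type} (𝒰 : Set (Set Y))
    (P : Geometry.SimplicialComplex ℝ (Fin n → ℝ)) (D : Set (Fin n → ℝ))
    (f : ↥D → Y) : Prop :=
  ∀ s ∈ P.faces, ∃ U ∈ 𝒰,
    f '' (Subtype.val ⁻¹' convexHull ℝ (s : Set (Fin n → ℝ))) ⊆ U

/-!
To each face `s` assign its carrier `V s`, the intersection of all members of the cover that contain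
`f (convexHull s ∩ D)`. Every face has a vertex in `D`, so only finitely many members occur and
`V s` is nonempty, hence contractible; moreover `V s ⊆ V t` whenever `s ⊆ t`. Now extend `f` over
the faces outside `L ∪ P⁰` one at a time, smaller faces first, always mapping a face into its
carrier. When `s` is reached, its boundary has been mapped into `V s` by monotonicity. This boundary
map is nullhomotopic in `V s`, so it extends over `convexHull s`, which is the cone on its boundary.
-/

open Topology unitInterval

section Cone

variable {B X Z : Type*} [TopologicalSpace B] [CompactSpace B] [TopologicalSpace X] [T2Space X]
  [TopologicalSpace Z]

/-- The three conditions on `Φ` say that it presents `X` as the cone on `B` with apex `c`, the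
points `(b, 1)` forming the base. -/
theorem exists_extension_cone_of_nullhomotopic {Φ : C(B × I, X)} {c : X}
    (hapex : ∀ p, Φ p = c ↔ p.2 = 0) (hinj : InjOn Φ {p | p.2 ≠ 0})
    (hsurj : ∀ x, x ≠ c → x ∈ range Φ) {k : C(B, Z)} (hk : k.Nullhomotopic) :
    ∃ h : C(X, Z), ∀ b, h (Φ (b, 1)) = k b := by
  obtain ⟨z, ⟨H⟩⟩ := hk
  rcases isEmpty_or_nonempty B with hB | ⟨⟨b⟩⟩
  · exact ⟨.const X z, fun b => hB.elim b⟩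
  have hΦ_surj : Function.Surjective Φ := fun x => by
    by_cases hx : x = c
    · exact ⟨(b, 0), hx ▸ (hapex _).2 rfl⟩
    · exact hsurj x hx
  have hΦ : IsQuotientMap Φ := Φ.continuous.isClosedMap.isQuotientMap Φ.continuous hΦ_surj
  let K : C(B × I, Z) := ⟨fun p => H.symm (p.2, p.1), by fun_prop⟩
  have hK_factors : Function.FactorsThrough K Φ := fun p q hpq => by
    by_cases hp : p.2 = 0
    · have hq : q.2 = 0 := (hapex q).1 (hpq ▸ (hapex p).2 hp)
      simp [K, hp, hq]
    · have hq : q.2 ≠ 0 := fun hq => hp ((hapex p).1 (hpq ▸ (hapex q).2 hq))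
      rw [hinj hp hq hpq]
  refine ⟨hΦ.lift K hK_factors, fun b => ?_⟩
  calc hΦ.lift K hK_factors (Φ (b, 1)) = K (b, 1) :=
        DFunLike.congr_fun (hΦ.lift_comp K hK_factors) (b, 1)
    _ = k b := by simp [K]

end Cone

section StdSimplex

variable {ι : Type*} [Fintype ι]

variable (ι) in
/-- The boundary of the standard simplex: the points with a vanishing coordinate. -/
def stdSimplexBoundary : Set (stdSimplex ℝ ι) := {w | ∃ i, w i = 0}

instance compactSpace_stdSimplexBoundary : CompactSpace (stdSimplexBoundary ι) := by
  have : stdSimplexBoundary ι = ⋃ i, {w : stdSimplex ℝ ι | w.1 i = 0} := by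
    ext w
    simp only [stdSimplexBoundary, mem_ofPred_eq, mem_iUnion]
    rfl
  refine isCompact_iff_compactSpace.1 (IsClosed.isCompact ?_)
  rw [this]
  exact isClosed_iUnion_of_finite fun i => isClosed_eq
    ((continuous_apply i).comp continuous_subtype_val) continuous_const

variable [Nonempty ι]

variable (ι) in
/-- The parametrization of the standard simplex as the cone on its boundary, with apex the
barycenter. -/
noncomputable def stdSimplexCone : C(stdSimplexBoundary ι × I, stdSimplex ℝ ι) where
  toFun p := ⟨AffineMap.lineMap (stdSimplex.barycenter (𝕜 := ℝ)).1 p.1.1.1 (p.2 : ℝ),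
    (convex_stdSimplex ℝ ι).lineMap_mem stdSimplex.barycenter.2 p.1.1.2 p.2.2⟩
  continuous_toFun := by
    simp only [AffineMap.lineMap_apply_module]
    fun_prop

theorem stdSimplexCone_apply (p : stdSimplexBoundary ι × I) (i : ι) :
    stdSimplexCone ι p i = (1 - p.2) * (Fintype.card ι : ℝ)⁻¹ + p.2 * p.1.1 i := by
  change AffineMap.lineMap (stdSimplex.barycenter (𝕜 := ℝ)).1 p.1.1.1 (p.2 : ℝ) i = _
  simp only [AffineMap.lineMap_apply_module, Pi.add_apply, Pi.smul_apply,
    stdSimplex.barycenter_apply, smul_eq_mul]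
  rfl

theorem stdSimplexCone_one (w : stdSimplexBoundary ι) : stdSimplexCone ι (w, 1) = w := by
  ext i
  simp [stdSimplexCone_apply]

theorem snd_le_of_stdSimplexCone_eq {p q : stdSimplexBoundary ι × I}
    (h : stdSimplexCone ι p = stdSimplexCone ι q) : q.2 ≤ p.2 := by
  obtain ⟨i, hi⟩ := q.1.2
  have hcoord : (1 - p.2) * (Fintype.card ι : ℝ)⁻¹ + p.2 * p.1.1 i
      = (1 - q.2) * (Fintype.card ι : ℝ)⁻¹ := by
    rw [← stdSimplexCone_apply, h, stdSimplexCone_apply, hi, mul_zero, add_zero]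
  have hcard : 0 < (Fintype.card ι : ℝ)⁻¹ := by positivity
  have hnonneg : 0 ≤ (p.2 : ℝ) * p.1.1 i := mul_nonneg p.2.2.1 (stdSimplex.zero_le _ i)
  have : (1 - p.2) * (Fintype.card ι : ℝ)⁻¹ ≤ (1 - q.2) * (Fintype.card ι : ℝ)⁻¹ := by linarith
  exact sub_le_sub_iff_left (1 : ℝ) |>.1 (le_of_mul_le_mul_right this hcard)

theorem stdSimplexCone_eq_barycenter_iff (p : stdSimplexBoundary ι × I) :
    stdSimplexCone ι p = stdSimplex.barycenter ↔ p.2 = 0 := by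
  have hzero (w : stdSimplexBoundary ι) : stdSimplexCone ι (w, 0) = stdSimplex.barycenter := by
    ext i
    simp only [stdSimplexCone_apply, Set.Icc.coe_zero, sub_zero, one_mul, zero_mul, add_zero]
    rfl
  refine ⟨fun h => le_antisymm ?_ p.2.2.1, fun h => ?_⟩
  · exact snd_le_of_stdSimplexCone_eq ((hzero p.1).trans h.symm)
  · rw [← hzero p.1, ← h]

theorem injOn_stdSimplexCone : InjOn (stdSimplexCone ι) {p | p.2 ≠ 0} := by
  rintro ⟨w, t⟩ ht ⟨w', t'⟩ - h
  obtain rfl : t = t' :=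
    le_antisymm (snd_le_of_stdSimplexCone_eq h.symm) (snd_le_of_stdSimplexCone_eq h)
  have ht_ne : (t : ℝ) ≠ 0 := fun h0 => ht (Subtype.ext h0)
  have hcoord (i : ι) : w.1 i = w'.1 i := by
    have := DFunLike.congr_fun h i
    simpa only [stdSimplexCone_apply, add_right_inj, mul_right_inj' ht_ne] using this
  rw [Subtype.ext (DFunLike.ext _ _ hcoord)]

/-- The ray from the barycenter through `w` leaves the simplex where the smallest coordinate of
`w` reaches zero. -/
theorem mem_range_stdSimplexCone {w : stdSimplex ℝ ι} (hw : w ≠ stdSimplex.barycenter) :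
    w ∈ range (stdSimplexCone ι) := by
  obtain ⟨i, hi⟩ := Finite.exists_min w
  let N : ℝ := Fintype.card ι
  have hN : 0 < N := Nat.cast_pos.2 (Fintype.card_pos (α := ι))
  have hsum : ∑ j, (w j - w i) = 1 - N * w i := by
    simp [Finset.sum_sub_distrib, N]
  have hpos : 0 < 1 - N * w i := by
    refine hsum ▸ (Finset.sum_nonneg fun j _ => sub_nonneg.2 (hi j)).lt_of_ne fun h0 => hw ?_
    have hconst (j : ι) : w j = w i := sub_eq_zero.1 <|
      (Finset.sum_eq_zero_iff_of_nonneg fun j _ => sub_nonneg.2 (hi j)).1 h0.symm j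
        (Finset.mem_univ j)
    have hwi : N * w i = 1 := by rw [← h0] at hsum; linarith
    ext j
    exact (hconst j).trans (eq_inv_of_mul_eq_one_right hwi)
  let u : stdSimplex ℝ ι := ⟨fun j => (w j - w i) / (1 - N * w i),
    fun j => div_nonneg (sub_nonneg.2 (hi j)) hpos.le,
    by rw [← Finset.sum_div, hsum, div_self hpos.ne']⟩
  have hu : u ∈ stdSimplexBoundary ι := ⟨i, show (w i - w i) / _ = 0 by simp⟩
  have hle : 1 - N * w i ≤ 1 := sub_le_self 1 (mul_nonneg hN.le (stdSimplex.zero_le w i))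
  refine ⟨(⟨u, hu⟩, ⟨1 - N * w i, hpos.le, hle⟩), stdSimplex.ext (funext fun j => ?_)⟩
  rw [stdSimplexCone_apply]
  change (1 - (1 - N * w i)) * N⁻¹ + (1 - N * w i) * ((w j - w i) / (1 - N * w i)) = w j
  rw [mul_div_cancel₀ _ hpos.ne']
  field_simp
  ring

theorem exists_extension_stdSimplex_of_nullhomotopic {Z : Type*} [TopologicalSpace Z]
    {k : C(stdSimplexBoundary ι, Z)} (hk : k.Nullhomotopic) :
    ∃ h : C(stdSimplex ℝ ι, Z), ∀ w : stdSimplexBoundary ι, h w = k w := by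
  simpa only [stdSimplexCone_one] using exists_extension_cone_of_nullhomotopic
    stdSimplexCone_eq_barycenter_iff injOn_stdSimplexCone (fun _ => mem_range_stdSimplexCone) hk

end StdSimplex

section AffineSimplex

variable {ι E : Type*} [Fintype ι] [AddCommGroup E] [Module ℝ E]

theorem linearCombination_image_stdSimplex_face (p : ι → E) (S : Set ι) :
    Fintype.linearCombination ℝ p '' {w ∈ stdSimplex ℝ ι | ∀ i ∉ S, w i = 0}
      = convexHull ℝ (p '' S) := by
  classical
  refine Subset.antisymm ?_ (convexHull_min ?_ (Convex.linear_image ?_ _))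
  · rintro _ ⟨w, ⟨hw, hwS⟩, rfl⟩
    have hsupp (i : ι) (hi : w i ≠ 0) : i ∈ S := by_contra fun hiS => hi (hwS i hiS)
    rw [Fintype.linearCombination_apply, ← finsum_eq_sum_of_fintype]
    exact (convex_convexHull ℝ (p '' S)).finsum_mem hw.1 ((finsum_eq_sum_of_fintype w).trans hw.2)
      fun i hi => subset_convexHull ℝ _ (mem_image_of_mem p (hsupp i hi))
  · rintro _ ⟨i, hi, rfl⟩
    refine ⟨Pi.single i 1, ⟨single_mem_stdSimplex ℝ i, fun j hj => ?_⟩, by simp⟩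
    exact Pi.single_eq_of_ne (ne_of_mem_of_not_mem hi hj).symm 1
  · rintro w ⟨hw, hwS⟩ w' ⟨hw', hwS'⟩ a b ha hb hab
    refine ⟨convex_stdSimplex ℝ ι hw hw' ha hb hab, fun i hi => ?_⟩
    simp [hwS i hi, hwS' i hi]

theorem injOn_linearCombination_stdSimplex {p : ι → E} (hp : AffineIndependent ℝ p) :
    InjOn (Fintype.linearCombination ℝ p) (stdSimplex ℝ ι) := fun w hw w' hw' h => by
  refine funext fun i => sub_eq_zero.1 (affineIndependent_iff.1 hp Finset.univ (w - w') ?_ ?_ i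
    (Finset.mem_univ i))
  · simp [hw.2, hw'.2]
  · rwa [← Fintype.linearCombination_apply, map_sub, sub_eq_zero]

theorem isClosedEmbedding_linearCombination_stdSimplex [TopologicalSpace E]
    [IsTopologicalAddGroup E] [ContinuousSMul ℝ E] [T2Space E] {p : ι → E}
    (hp : AffineIndependent ℝ p) :
    IsClosedEmbedding fun w : stdSimplex ℝ ι => Fintype.linearCombination ℝ p w.1 :=
  Continuous.isClosedEmbedding
    ((Fintype.linearCombination ℝ p).continuous_of_finiteDimensional.comp continuous_subtype_val)
    (injOn_linearCombination_stdSimplex hp).injective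

end AffineSimplex

theorem finite_induction_insert_minimal {α : Type*} [Preorder α] {A B : Set α} (hB : B.Finite)
    (hAB : A ⊆ B) {motive : Set α → Prop} (base : motive A)
    (step : ∀ F, A ⊆ F → F ⊆ B → ∀ b ∈ B \ F, (∀ c ∈ B, c < b → c ∈ F) →
      motive F → motive (insert b F)) : motive B := by
  have hfin : {F | A ⊆ F ∧ F ⊆ B ∧ motive F}.Finite :=
    hB.finite_subsets.subset fun F hF => hF.2.1
  obtain ⟨F, ⟨hAF, hFB, hF⟩, hmax⟩ := hfin.exists_maximal ⟨A, Subset.rfl, hAB, base⟩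
  by_cases hBF : B ⊆ F
  · exact hFB.antisymm hBF ▸ hF
  obtain ⟨b, hb, hmin⟩ := (hB.subset sdiff_subset).exists_minimal (sdiff_nonempty.2 hBF)
  have hlt (c : α) (hc : c ∈ B) (hcb : c < b) : c ∈ F :=
    by_contra fun hcF => hcb.not_ge (hmin ⟨hc, hcF⟩ hcb.le)
  have hinsert := step F hAF hFB b hb hlt hF
  exact absurd (hmax ⟨hAF.trans (subset_insert b F), insert_subset hb.1 hFB, hinsert⟩
    (subset_insert b F) (mem_insert b F)) hb.2

section Realization

variable {E : Type*} [AddCommGroup E] [Module ℝ E]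

/-- The geometric realization `|F|` of a family `F` of vertex sets, the union of their convex
hulls. For the faces of a simplicial complex this is its space. -/
def realization (F : Set (Finset E)) : Set E := ⋃ s ∈ F, convexHull ℝ (s : Set E)

theorem mem_realization {F : Set (Finset E)} {x : E} :
    x ∈ realization F ↔ ∃ s ∈ F, x ∈ convexHull ℝ (s : Set E) := by
  simp only [realization, mem_iUnion₂, exists_prop]

theorem convexHull_subset_realization {F : Set (Finset E)} {s : Finset E} (hs : s ∈ F) :
    convexHull ℝ (s : Set E) ⊆ realization F := fun _ hx => mem_realization.2 ⟨s, hs, hx⟩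

theorem realization_insert (s : Finset E) (F : Set (Finset E)) :
    realization (insert s F) = convexHull ℝ (s : Set E) ∪ realization F :=
  biUnion_insert ..

theorem realization_union (F G : Set (Finset E)) :
    realization (F ∪ G) = realization F ∪ realization G :=
  biUnion_union ..

theorem realization_image_singleton (A : Set E) : realization (singleton '' A) = A := by
  simp [realization]

theorem isRelLowerSet_image_singleton {α : Type*} (A : Set α) :
    IsRelLowerSet (singleton '' A : Set (Finset α)) Finset.Nonempty := by
  rintro _ ⟨v, hv, rfl⟩
  refine ⟨Finset.singleton_nonempty v, fun t htv ht => ⟨v, hv, ?_⟩⟩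
  exact ((Finset.subset_singleton_iff.1 htv).resolve_left ht.ne_empty).symm

theorem isClosed_realization [TopologicalSpace E] [IsTopologicalAddGroup E] [ContinuousSMul ℝ E]
    [T2Space E] {F : Set (Finset E)} (hF : F.Finite) : IsClosed (realization F) :=
  hF.isClosed_biUnion fun s _ => s.finite_toSet.isClosed_convexHull ℝ

theorem linearCombination_image_stdSimplexBoundary (s : Finset E) :
    (fun w : stdSimplex ℝ s => Fintype.linearCombination ℝ ((↑) : s → E) w.1) ''
      stdSimplexBoundary s = realization (Iio s) := by
  classical
  have hface (i : s) : ((↑) : s → E) '' {i}ᶜ = (s.erase i : Finset E) := by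
    rw [image_compl_eq_range_sdiff_image Subtype.val_injective]
    simp
  ext x
  refine ⟨?_, fun hx => ?_⟩
  · rintro ⟨w, ⟨i, hi⟩, rfl⟩
    refine mem_realization.2 ⟨s.erase i, Finset.erase_ssubset i.2, ?_⟩
    rw [← hface, ← linearCombination_image_stdSimplex_face]
    refine ⟨w.1, ⟨w.2, fun j hj => ?_⟩, rfl⟩
    rwa [not_not.1 hj]
  · obtain ⟨t, hts, hxt⟩ := mem_realization.1 hx
    obtain ⟨i, his, hit⟩ := Finset.exists_of_ssubset hts
    have hx_face : x ∈ convexHull ℝ (((↑) : s → E) '' {⟨i, his⟩}ᶜ) := by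
      rw [hface]
      exact convexHull_mono (Finset.coe_subset.2 (Finset.subset_erase.2 ⟨hts.1, hit⟩)) hxt
    rw [← linearCombination_image_stdSimplex_face] at hx_face
    obtain ⟨w, ⟨hw, hwi⟩, rfl⟩ := hx_face
    exact ⟨⟨w, hw⟩, ⟨⟨i, his⟩, hwi _ (not_not.2 rfl)⟩, rfl⟩

theorem convexHull_inter_realization_subset {P : SimplicialComplex ℝ E} {F : Set (Finset E)}
    (hFP : F ⊆ P.faces) (hF : IsRelLowerSet F Finset.Nonempty) {s : Finset E} (hs : s ∈ P.faces)
    (hsF : s ∉ F) : convexHull ℝ (s : Set E) ∩ realization F ⊆ realization (Iio s) := by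
  classical
  rintro x ⟨hxs, hxF⟩
  obtain ⟨t, ht, hxt⟩ := mem_realization.1 hxF
  have hne : s ∩ t ≠ s := fun h =>
    hsF (hF.mem_of_le ht (Finset.inter_eq_left.1 h) (P.nonempty_of_mem_faces hs))
  refine mem_realization.2 ⟨s ∩ t, Finset.inter_subset_left.lt_of_ne hne, ?_⟩
  rw [Finset.coe_inter]
  exact P.inter_subset_convexHull hs (hFP ht) ⟨hxs, hxt⟩

end Realization

section Extension

variable {E Y : Type*} [AddCommGroup E] [Module ℝ E] [TopologicalSpace E]
  [IsTopologicalAddGroup E] [ContinuousSMul ℝ E] [T2Space E] [TopologicalSpace Y]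

theorem exists_extension_simplex_of_contractible {s : Finset E} (hs_ne : s.Nonempty)
    (hs : AffineIndependent ℝ ((↑) : s → E)) {V : Set Y} [ContractibleSpace V] {g : E → Y}
    (hg : ContinuousOn g (realization (Iio s))) (hgV : MapsTo g (realization (Iio s)) V) :
    ∃ h : E → Y, ContinuousOn h (convexHull ℝ (s : Set E)) ∧
      MapsTo h (convexHull ℝ (s : Set E)) V ∧ EqOn h g (realization (Iio s)) := by
  have := hs_ne.to_subtype
  let e : stdSimplex ℝ s → E := fun w => Fintype.linearCombination ℝ ((↑) : s → E) w.1
  have he : IsClosedEmbedding e := isClosedEmbedding_linearCombination_stdSimplex hs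
  have he_range : range e = convexHull ℝ (s : Set E) := by
    calc range e = Fintype.linearCombination ℝ ((↑) : s → E) '' stdSimplex ℝ s :=
          (image_eq_range _ _).symm
      _ = convexHull ℝ (((↑) : s → E) '' univ) := by
          simpa using linearCombination_image_stdSimplex_face ((↑) : s → E) univ
      _ = convexHull ℝ (s : Set E) := by simp
  have he_boundary : e '' stdSimplexBoundary s = realization (Iio s) :=
    linearCombination_image_stdSimplexBoundary s
  rw [← he_boundary] at hg hgV ⊢
  rw [← he_range]
  let k : C(stdSimplexBoundary s, V) :=
    ⟨fun w => ⟨g (e w), hgV (mem_image_of_mem e w.2)⟩, (hg.comp_continuous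
      (he.continuous.comp continuous_subtype_val) fun w => mem_image_of_mem e w.2).subtype_mk _⟩
  obtain ⟨h, hh⟩ := exists_extension_stdSimplex_of_nullhomotopic
    ((id_nullhomotopic V).comp_left k)
  have hext (w : stdSimplex ℝ s) : Function.extend e (fun w => (h w : Y)) g (e w) = h w :=
    he.injective.extend_apply _ _ w
  refine ⟨Function.extend e (fun w => (h w : Y)) g, ?_, ?_, ?_⟩
  · rw [← image_univ, he.isInducing.continuousOn_image_iff, continuousOn_univ]
    exact (continuous_subtype_val.comp h.continuous).congr fun w => (hext w).symm
  · rintro _ ⟨w, rfl⟩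
    exact hext w ▸ (h w).2
  · rintro _ ⟨w, hw, rfl⟩
    exact (hext w).trans (congrArg Subtype.val (hh ⟨w, hw⟩))

theorem exists_extension_insert_face {P : SimplicialComplex ℝ E} {F : Set (Finset E)}
    (hFP : F ⊆ P.faces) (hF : IsRelLowerSet F Finset.Nonempty)
    (hF_closed : IsClosed (realization F)) {s : Finset E} (hs : s ∈ P.faces) (hsF : s ∉ F)
    (hs_boundary : realization (Iio s) ⊆ realization F) {V : Set Y} [ContractibleSpace V]
    {g : E → Y} (hg : ContinuousOn g (realization F)) (hgV : MapsTo g (realization (Iio s)) V) :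
    ∃ h : E → Y, ContinuousOn h (realization (insert s F)) ∧ EqOn h g (realization F) ∧
      MapsTo h (convexHull ℝ (s : Set E)) V := by
  classical
  obtain ⟨k, hk, hkV, hkg⟩ := exists_extension_simplex_of_contractible
    (P.nonempty_of_mem_faces hs) (P.indep hs) (hg.mono hs_boundary) hgV
  let h : E → Y := (convexHull ℝ (s : Set E)).piecewise k g
  have hhk : EqOn h k (convexHull ℝ (s : Set E)) := piecewise_eqOn _ _ _
  have hhg : EqOn h g (realization F) := fun x hx => by
    by_cases hxs : x ∈ convexHull ℝ (s : Set E)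
    · exact (hhk hxs).trans (hkg (convexHull_inter_realization_subset hFP hF hs hsF ⟨hxs, hx⟩))
    · exact piecewise_eq_of_notMem _ _ _ hxs
  refine ⟨h, ?_, hhg, hkV.congr hhk.symm⟩
  rw [realization_insert]
  exact (hk.congr hhk).union_of_isClosed (hg.congr hhg)
    (s.finite_toSet.isClosed_convexHull ℝ) hF_closed

theorem exists_continuousOn_extension_of_contractible_carrier {P : SimplicialComplex ℝ E}
    (hP : P.faces.Finite) {F : Set (Finset E)} (hFP : F ⊆ P.faces)
    (hF : IsRelLowerSet F Finset.Nonempty) {V : Finset E → Set Y} (hV_mono : MonotoneOn V P.faces)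
    (hV : ∀ s ∈ P.faces, ContractibleSpace (V s)) {f : E → Y} (hf : ContinuousOn f (realization F))
    (hfV : ∀ s ∈ F, MapsTo f (convexHull ℝ (s : Set E)) (V s)) :
    ∃ g : E → Y, ContinuousOn g P.space ∧ EqOn g f (realization F) ∧
      ∀ s ∈ P.faces, MapsTo g (convexHull ℝ (s : Set E)) (V s) := by
  let Extends (G : Set (Finset E)) : Prop := IsRelLowerSet G Finset.Nonempty ∧
    ∃ g : E → Y, ContinuousOn g (realization G) ∧ EqOn g f (realization F) ∧
      ∀ s ∈ G, MapsTo g (convexHull ℝ (s : Set E)) (V s)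
  suffices Extends P.faces from this.2
  refine finite_induction_insert_minimal hP hFP ⟨hF, f, hf, fun _ _ => rfl, hfV⟩ ?_
  rintro G hFG hGP s ⟨hs, hsG⟩ hlt ⟨hG, g, hg, hgf, hgV⟩
  have hproper {t : Finset E} (hts : t < s) (ht : t.Nonempty) : t ∈ G :=
    hlt t (P.down_closed hs hts.le ht) hts
  have hface {x : E} (hx : x ∈ realization (Iio s)) :
      ∃ t ∈ G, t < s ∧ x ∈ convexHull ℝ (t : Set E) := by
    obtain ⟨t, hts, hxt⟩ := mem_realization.1 hx
    exact ⟨t, hproper hts (Finset.coe_nonempty.1 (convexHull_nonempty_iff.1 ⟨x, hxt⟩)), hts, hxt⟩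
  have := hV s hs
  obtain ⟨h, hh, hhg, hhV⟩ := exists_extension_insert_face hGP hG
    (isClosed_realization (hP.subset hGP)) hs hsG
    (fun x hx => let ⟨t, ht, _, hxt⟩ := hface hx; convexHull_subset_realization ht hxt) hg
    (fun x hx => let ⟨t, ht, hts, hxt⟩ := hface hx
      hV_mono (hGP ht) hs hts.le (hgV t ht hxt))
  refine ⟨?_, h, hh, ?_, ?_⟩
  · rintro t (rfl | ht)
    · exact ⟨P.nonempty_of_mem_faces hs, fun u hut hu => hut.eq_or_lt.imp id (hproper · hu)⟩
    · exact ⟨(hG ht).1, fun u hut hu => .inr ((hG ht).2 hut hu)⟩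
  · exact fun x hx => (hhg (biUnion_subset_biUnion_left hFG hx)).trans (hgf hx)
  · rintro t (rfl | ht)
    · exact hhV
    · exact (hgV t ht).congr (hhg.symm.mono (convexHull_subset_realization ht))

theorem exists_extension_of_contractible_carrier {P : SimplicialComplex ℝ E} (hP : P.faces.Finite)
    {F : Set (Finset E)} (hFP : F ⊆ P.faces) (hF : IsRelLowerSet F Finset.Nonempty) {D : Set E}
    (hD : realization F = D) {V : Finset E → Set Y} (hV_mono : MonotoneOn V P.faces)
    (hV : ∀ s ∈ P.faces, ContractibleSpace (V s)) (f : C(D, Y))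
    (hfV : ∀ s ∈ F, ∀ x : D, ↑x ∈ convexHull ℝ (s : Set E) → f x ∈ V s) :
    ∃ g : C(P.space, Y), (∀ x (hx : x ∈ D) (hx' : x ∈ P.space), g ⟨x, hx'⟩ = f ⟨x, hx⟩) ∧
      ∀ s ∈ P.faces, ∀ x : P.space, ↑x ∈ convexHull ℝ (s : Set E) → g x ∈ V s := by
  subst hD
  rcases isEmpty_or_nonempty P.space with hP_empty | ⟨⟨x₀, hx₀⟩⟩
  · exact ⟨⟨hP_empty.elim, continuous_of_const hP_empty.elim⟩, fun x _ hx => hP_empty.elim ⟨x, hx⟩,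
      fun s _ x => hP_empty.elim x⟩
  obtain ⟨s₀, hs₀, -⟩ := SimplicialComplex.mem_space_iff.1 hx₀
  have := hV s₀ hs₀
  obtain ⟨y₀⟩ : Nonempty Y := (inferInstance : Nonempty (V s₀)).map (↑)
  let F₀ : E → Y := Function.extend Subtype.val f fun _ => y₀
  have hF₀ (x : realization F) : F₀ x = f x := Subtype.val_injective.extend_apply f _ x
  have hF₀_cont : ContinuousOn F₀ (realization F) :=
    continuousOn_iff_continuous_domRestrict.2 (f.continuous.congr fun x => (hF₀ x).symm)
  obtain ⟨g, hg, hgf, hgV⟩ := exists_continuousOn_extension_of_contractible_carrier hP hFP hF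
    hV_mono hV hF₀_cont fun s hs x hx =>
      hF₀ ⟨x, convexHull_subset_realization hs hx⟩ ▸ hfV s hs _ hx
  exact ⟨⟨P.space.domRestrict g, hg.domRestrict⟩, fun x hx _ => (hgf hx).trans (hF₀ ⟨x, hx⟩),
    fun s hs x hx => hgV s hs hx⟩

end Extension

section SmallMap

variable {E Y : Type*} [AddCommGroup E] [Module ℝ E]

/-- The carrier of a map `f : D → Y` with respect to a family `𝒰`: it sends a vertex set `s` to the
intersection of all members of `𝒰` that contain `f (convexHull s ∩ D)`. -/
def coverCarrier (𝒰 : Set (Set Y)) {D : Set E} (f : D → Y) (s : Finset E) : Set Y :=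
  ⋂₀ {U ∈ 𝒰 | f '' (Subtype.val ⁻¹' convexHull ℝ (s : Set E)) ⊆ U}

theorem coverCarrier_mono (𝒰 : Set (Set Y)) {D : Set E} (f : D → Y) :
    Monotone (coverCarrier 𝒰 f) := fun _ _ hst =>
  sInter_subset_sInter fun _ hU => ⟨hU.1,
    (image_mono (preimage_mono (convexHull_mono (Finset.coe_subset.2 hst)))).trans hU.2⟩

theorem apply_mem_coverCarrier (𝒰 : Set (Set Y)) {D : Set E} (f : D → Y) {s : Finset E} {x : D}
    (hx : ↑x ∈ convexHull ℝ (s : Set E)) : f x ∈ coverCarrier 𝒰 f s :=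
  fun _ hU => hU.2 (mem_image_of_mem f hx)

theorem contractibleSpace_coverCarrier [TopologicalSpace Y] {𝒰 : Set (Set Y)}
    (hfin : ∀ y, {U ∈ 𝒰 | y ∈ U}.Finite)
    (hgood : ∀ t : Finset (Set Y), ↑t ⊆ 𝒰 → t.Nonempty → (⋂₀ (↑t : Set (Set Y))).Nonempty →
      ContractibleSpace ↥(⋂₀ (↑t : Set (Set Y))))
    {D : Set E} {f : D → Y} {s : Finset E} {x : D} (hx : ↑x ∈ convexHull ℝ (s : Set E))
    (hsmall : ∃ U ∈ 𝒰, f '' (Subtype.val ⁻¹' convexHull ℝ (s : Set E)) ⊆ U) :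
    ContractibleSpace (coverCarrier 𝒰 f s) := by
  have hfx := apply_mem_coverCarrier 𝒰 f hx
  lift {U ∈ 𝒰 | f '' (Subtype.val ⁻¹' convexHull ℝ (s : Set E)) ⊆ U} to Finset (Set Y)
    using (hfin (f x)).subset fun U hU => ⟨hU.1, hfx U hU⟩ with t ht
  rw [coverCarrier, ← ht] at hfx ⊢
  refine hgood t (ht ▸ sep_subset _ _) ?_ ⟨f x, hfx⟩
  exact Finset.coe_nonempty.1 (ht ▸ hsmall)

theorem small_map_extension_general [TopologicalSpace E] [IsTopologicalAddGroup E]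
    [ContinuousSMul ℝ E] [T2Space E] [TopologicalSpace Y]
    (𝒰 : Set (Set Y)) (hfin : ∀ y, {U ∈ 𝒰 | y ∈ U}.Finite)
    (hgood : ∀ t : Finset (Set Y), ↑t ⊆ 𝒰 → t.Nonempty → (⋂₀ (↑t : Set (Set Y))).Nonempty →
      ContractibleSpace ↥(⋂₀ (↑t : Set (Set Y))))
    (P L : SimplicialComplex ℝ E) (hP : P.faces.Finite) (hL : L.faces ⊆ P.faces)
    (f : C(↥(L.space ∪ P.vertices), Y))
    (hsmall : ∀ s ∈ P.faces, ∃ U ∈ 𝒰, f '' (Subtype.val ⁻¹' convexHull ℝ (s : Set E)) ⊆ U) :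
    ∃ f' : C(↥P.space, Y),
      (∀ (x : E) (hx : x ∈ L.space ∪ P.vertices) (hx' : x ∈ P.space),
        f' ⟨x, hx'⟩ = f ⟨x, hx⟩) ∧
      (∀ U ∈ 𝒰, ∀ s ∈ P.faces, f '' (Subtype.val ⁻¹' convexHull ℝ (s : Set E)) ⊆ U →
        f' '' (Subtype.val ⁻¹' convexHull ℝ (s : Set E)) ⊆ U) := by
  have hD : realization (L.faces ∪ singleton '' P.vertices) = L.space ∪ P.vertices := by
    rw [realization_union, realization_image_singleton]
    rfl
  have hV (s : Finset E) (hs : s ∈ P.faces) : ContractibleSpace (coverCarrier 𝒰 f s) := by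
    obtain ⟨v, hv⟩ := P.nonempty_of_mem_faces hs
    have hvP : v ∈ P.vertices :=
      P.down_closed hs (Finset.singleton_subset_iff.2 hv) (Finset.singleton_nonempty v)
    exact contractibleSpace_coverCarrier hfin hgood (x := ⟨v, .inr hvP⟩)
      (subset_convexHull ℝ _ hv) (hsmall s hs)
  obtain ⟨f', hf', hf'V⟩ := exists_extension_of_contractible_carrier hP
    (union_subset hL (image_subset_iff.2 fun _ hv => hv))
    (L.isRelLowerSet_faces.union (isRelLowerSet_image_singleton _)) hD
    ((coverCarrier_mono 𝒰 f).monotoneOn _) hV f fun s _ x hx => apply_mem_coverCarrier 𝒰 f hx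
  refine ⟨f', hf', fun U hU s hs hfU => ?_⟩
  rintro _ ⟨x, hx, rfl⟩
  exact hf'V s hs x hx U ⟨hU, hfU⟩

end SmallMap

/-- Let `𝒰` be a locally finite good open cover of a topological space `Y`.
Let `P` be a finite simplicial complex in `ℝⁿ`, let `L` be a subcomplex of `P`, and set
`D = |L| ∪ P⁰` where `P⁰` is the set of vertices of `P`. Every continuous `(𝒰,P)`-small map
`f : D → Y` extends to a continuous `(𝒰,P)`-small map `f' : |P| → Y` such that for every
`U ∈ 𝒰` and every face `s` of `P`, if `f(convexHull s ∩ D) ⊆ U` then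
`f'(convexHull s) ⊆ U`. -/
theorem small_map_extension
    {n : ℕ} {Y : Type} [TopologicalSpace Y]
    (𝒰 : Set (Set Y)) (hopen : ∀ U ∈ 𝒰, IsOpen U) (hcov : ⋃₀ 𝒰 = Set.univ)
    (hlf : ∀ y : Y, ∃ W, IsOpen W ∧ y ∈ W ∧ {U ∈ 𝒰 | (U ∩ W).Nonempty}.Finite)
    (hgood : ∀ t : Finset (Set Y), ↑t ⊆ 𝒰 → t.Nonempty → (⋂₀ (↑t : Set (Set Y))).Nonempty →
      ContractibleSpace ↥(⋂₀ (↑t : Set (Set Y))))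
    (P L : Geometry.SimplicialComplex ℝ (Fin n → ℝ)) (hP : P.faces.Finite)
    (hL : L.faces ⊆ P.faces)
    (f : C(↥(L.space ∪ P.vertices), Y))
    (hsmall : IsSmallMap 𝒰 P (L.space ∪ P.vertices) f) :
    ∃ f' : C(↥P.space, Y),
      (∀ (x : Fin n → ℝ) (hx : x ∈ L.space ∪ P.vertices) (hx' : x ∈ P.space),
        f' ⟨x, hx'⟩ = f ⟨x, hx⟩) ∧
      IsSmallMap 𝒰 P P.space f' ∧
      (∀ U ∈ 𝒰, ∀ s ∈ P.faces,
        f '' (Subtype.val ⁻¹' convexHull ℝ (s : Set (Fin n → ℝ))) ⊆ U →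
        f' '' (Subtype.val ⁻¹' convexHull ℝ (s : Set (Fin n → ℝ))) ⊆ U) := by
  obtain ⟨f', hf', hf'U⟩ := small_map_extension_general 𝒰
    (fun y => let ⟨_, _, hyW, hfin⟩ := hlf y; hfin.subset fun _ hU => ⟨hU.1, y, hU.2, hyW⟩)
    hgood P L hP hL f hsmall
  exact ⟨f', hf', fun s hs => (hsmall s hs).imp fun U hU => ⟨hU.1, hf'U U hU.1 s hs hU.2⟩, hf'U⟩
end

section
/- Let L be a locally finite simplicial complex in ℝⁿ, i.e., every point of |L| has a neighbourhood meeting the convex hulls of only finitely many faces of L. Then the family {St(x,L) : x ∈ |L|} of open stars of points of |L| is a good open cover of |L| which is locally finite (as a family of distinct sets): each open star St(x,L) is an open subset of |L| containing x, and every nonempty intersection of finitely many open stars is contractible. -/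
/-!
Each point of `|L|` lies in the open simplex of exactly one face, its carrier, and a face contains
the point in its convex hull exactly when it contains the carrier. Hence the open star of `x` is
the union of the open simplexes of the faces containing the carrier of `x`. If open stars have a
common point, their carriers are all contained in the carrier of that point, so the union of these
carriers is itself a face, and the intersection of the stars is again an open star. Finally, an
open star is star-convex about its centre, and its complement in `|L|` is a union of closed
simplexes, which is closed by local finiteness.
-/

open Set Geometry

/-- The open simplex spanned by a finite set `s`: convex combinations of the points of `s`
with all coefficients strictly positive. -/
def openSimplex {n : ℕ} (s : Finset (Fin n → ℝ)) : Set (Fin n → ℝ) :=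
  {x | ∃ w : (Fin n → ℝ) → ℝ, (∀ v ∈ s, 0 < w v) ∧
    (∑ v ∈ s, w v) = 1 ∧ (∑ v ∈ s, w v • v) = x}

/-- The open star of a point `x` with respect to a simplicial complex `P`: the union of the
open simplexes of all faces of `P` whose convex hull (closure) contains `x`. -/
def openStar {n : ℕ} (P : Geometry.SimplicialComplex ℝ (Fin n → ℝ))
    (x : Fin n → ℝ) : Set (Fin n → ℝ) :=
  ⋃ s ∈ {s ∈ P.faces | x ∈ convexHull ℝ (s : Set (Fin n → ℝ))}, openSimplex s

section OpenSimplex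

variable {n : ℕ} {s : Finset (Fin n → ℝ)} {x y : Fin n → ℝ}

theorem openSimplex_subset_convexHull (s : Finset (Fin n → ℝ)) :
    openSimplex s ⊆ convexHull ℝ (s : Set (Fin n → ℝ)) := by
  rintro x ⟨w, hw_pos, hw_sum, hwx⟩
  exact Finset.mem_convexHull'.2 ⟨w, fun v hv ↦ (hw_pos v hv).le, hw_sum, hwx⟩

theorem openSimplex_nonempty (hs : s.Nonempty) : (openSimplex s).Nonempty := by
  have hcard : (0 : ℝ) < s.card := Nat.cast_pos.2 hs.card_pos
  refine ⟨_, fun _ ↦ (s.card : ℝ)⁻¹, fun _ _ ↦ inv_pos.2 hcard, ?_, rfl⟩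
  rw [Finset.sum_const, nsmul_eq_mul, mul_inv_cancel₀ hcard.ne']

theorem exists_subset_mem_openSimplex (hx : x ∈ convexHull ℝ (s : Set (Fin n → ℝ))) :
    ∃ u ⊆ s, u.Nonempty ∧ x ∈ openSimplex u := by
  obtain ⟨w, hw_nonneg, hw_sum, hwx⟩ := Finset.mem_convexHull'.1 hx
  have hsum : ∑ v ∈ s with w v ≠ 0, w v = 1 := (Finset.sum_filter_ne_zero s).trans hw_sum
  refine ⟨s.filter (w · ≠ 0), Finset.filter_subset _ _,
    Finset.nonempty_of_sum_ne_zero (hsum ▸ one_ne_zero), w, fun v hv ↦ ?_, hsum, ?_⟩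
  · obtain ⟨hvs, hv0⟩ := Finset.mem_filter.1 hv
    exact (hw_nonneg v hvs).lt_of_ne' hv0
  · rw [← hwx]
    exact Finset.sum_filter_of_ne fun v _ ↦ left_ne_zero_of_smul

theorem combo_convexHull_openSimplex_mem_openSimplex
    (hx : x ∈ convexHull ℝ (s : Set (Fin n → ℝ))) (hy : y ∈ openSimplex s)
    {a b : ℝ} (ha : 0 ≤ a) (hb : 0 < b) (hab : a + b = 1) : a • x + b • y ∈ openSimplex s := by
  obtain ⟨w, hw_nonneg, hw_sum, rfl⟩ := Finset.mem_convexHull'.1 hx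
  obtain ⟨w', hw'_pos, hw'_sum, rfl⟩ := hy
  refine ⟨fun v ↦ a * w v + b * w' v, fun v hv ↦ ?_, ?_, ?_⟩
  · exact add_pos_of_nonneg_of_pos (mul_nonneg ha (hw_nonneg v hv)) (mul_pos hb (hw'_pos v hv))
  · rw [Finset.sum_add_distrib, ← Finset.mul_sum, ← Finset.mul_sum, hw_sum, hw'_sum, mul_one,
      mul_one, hab]
  · simp only [add_smul, mul_smul, Finset.sum_add_distrib, Finset.smul_sum]

theorem subset_of_mem_openSimplex_of_mem_affineSpan
    (hs : AffineIndependent ℝ ((↑) : s → Fin n → ℝ)) (hx : x ∈ openSimplex s)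
    {t : Set (Fin n → ℝ)} (hxt : x ∈ affineSpan ℝ (s ∩ t : Set (Fin n → ℝ))) :
    (s : Set (Fin n → ℝ)) ⊆ t := by
  obtain ⟨w, hw_pos, hw_sum, rfl⟩ := hx
  have hsum : ∑ i : s, w i = 1 := (Finset.sum_coe_sort s w).trans hw_sum
  have hcomb : Finset.univ.affineCombination ℝ ((↑) : s → Fin n → ℝ) (fun i ↦ w i) =
      ∑ v ∈ s, w v • v := by
    rw [Finset.affineCombination_eq_linear_combination _ _ _ hsum]
    exact Finset.sum_coe_sort s fun v ↦ w v • v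
  rw [← hcomb, ← Subtype.image_preimage_coe] at hxt
  intro v hv
  by_contra hvt
  exact (hw_pos v hv).ne' <|
    hs.eq_zero_of_affineCombination_mem_affineSpan hsum hxt (Finset.mem_univ ⟨v, hv⟩) hvt

end OpenSimplex

section Carrier

variable {n : ℕ} {P : SimplicialComplex ℝ (Fin n → ℝ)} {s u : Finset (Fin n → ℝ)}
  {x : Fin n → ℝ}

theorem exists_face_mem_openSimplex (hx : x ∈ P.space) : ∃ u ∈ P.faces, x ∈ openSimplex u := by
  obtain ⟨s, hs, hxs⟩ := SimplicialComplex.mem_space_iff.1 hx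
  obtain ⟨u, hus, hu, hxu⟩ := exists_subset_mem_openSimplex hxs
  exact ⟨u, P.down_closed hs hus hu, hxu⟩

theorem mem_convexHull_iff_subset_of_mem_openSimplex (hu : u ∈ P.faces) (hs : s ∈ P.faces)
    (hx : x ∈ openSimplex u) : x ∈ convexHull ℝ (s : Set (Fin n → ℝ)) ↔ u ⊆ s := by
  refine ⟨fun hxs ↦ ?_, fun hus ↦
    convexHull_mono (Finset.coe_subset.2 hus) (openSimplex_subset_convexHull u hx)⟩
  have hxus : x ∈ convexHull ℝ (u ∩ s : Set (Fin n → ℝ)) :=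
    P.inter_subset_convexHull hu hs ⟨openSimplex_subset_convexHull u hx, hxs⟩
  exact Finset.coe_subset.1 <| subset_of_mem_openSimplex_of_mem_affineSpan (P.indep hu) hx
    (convexHull_subset_affineSpan _ hxus)

end Carrier

/-- The open star of a face `u` of `P`: the union of the open simplexes of all faces containing
`u`. It is the open star of every point of the open simplex of `u`; the definition makes sense for
any finite set `u`. -/
def openFaceStar {n : ℕ} (P : SimplicialComplex ℝ (Fin n → ℝ)) (u : Finset (Fin n → ℝ)) :
    Set (Fin n → ℝ) :=
  ⋃ s ∈ {s ∈ P.faces | u ⊆ s}, openSimplex s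

section OpenFaceStar

variable {n : ℕ} {P : SimplicialComplex ℝ (Fin n → ℝ)} {s u : Finset (Fin n → ℝ)}
  {x : Fin n → ℝ}

theorem mem_openFaceStar :
    x ∈ openFaceStar P u ↔ ∃ s ∈ P.faces, u ⊆ s ∧ x ∈ openSimplex s := by
  simp only [openFaceStar, mem_iUnion₂, mem_ofPred_eq, exists_prop, and_assoc]

theorem mem_openFaceStar_iff_subset (hs : s ∈ P.faces) (hx : x ∈ openSimplex s) :
    x ∈ openFaceStar P u ↔ u ⊆ s := by
  refine ⟨fun h ↦ ?_, fun hus ↦ mem_openFaceStar.2 ⟨s, hs, hus, hx⟩⟩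
  obtain ⟨s', hs', hus', hxs'⟩ := mem_openFaceStar.1 h
  exact hus'.trans <| (mem_convexHull_iff_subset_of_mem_openSimplex hs' hs hxs').1
    (openSimplex_subset_convexHull s hx)

theorem openFaceStar_subset_space : openFaceStar P u ⊆ P.space := fun _ hx ↦
  let ⟨s, hs, _, hxs⟩ := mem_openFaceStar.1 hx
  SimplicialComplex.convexHull_subset_space hs (openSimplex_subset_convexHull s hxs)

theorem openStar_eq_openFaceStar (hu : u ∈ P.faces) (hx : x ∈ openSimplex u) :
    openStar P x = openFaceStar P u := by
  have hfaces : {s ∈ P.faces | x ∈ convexHull ℝ (s : Set (Fin n → ℝ))} =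
      {s ∈ P.faces | u ⊆ s} :=
    Set.ext fun s ↦ and_congr_right fun hs ↦ mem_convexHull_iff_subset_of_mem_openSimplex hu hs hx
  rw [openStar, hfaces, openFaceStar]

theorem starConvex_openFaceStar (hu : u ∈ P.faces) (hx : x ∈ openSimplex u) :
    StarConvex ℝ x (openFaceStar P u) := by
  refine (starConvex_iff_forall_pos (mem_openFaceStar.2 ⟨u, hu, Subset.rfl, hx⟩)).2
    fun y hy a b ha hb hab ↦ ?_
  obtain ⟨s, hs, hus, hys⟩ := mem_openFaceStar.1 hy
  have hxs : x ∈ convexHull ℝ (s : Set (Fin n → ℝ)) :=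
    (mem_convexHull_iff_subset_of_mem_openSimplex hu hs hx).2 hus
  exact mem_openFaceStar.2
    ⟨s, hs, hus, combo_convexHull_openSimplex_mem_openSimplex hxs hys ha.le hb hab⟩

theorem contractibleSpace_openFaceStar (hu : u ∈ P.faces) :
    ContractibleSpace (openFaceStar P u) := by
  obtain ⟨x, hx⟩ := openSimplex_nonempty (SimplicialComplex.nonempty_of_mem_faces hu)
  exact (starConvex_openFaceStar hu hx).contractibleSpace
    ⟨x, mem_openFaceStar.2 ⟨u, hu, Subset.rfl, hx⟩⟩

theorem space_diff_openFaceStar (P : SimplicialComplex ℝ (Fin n → ℝ)) (u : Finset (Fin n → ℝ)) :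
    P.space \ openFaceStar P u =
      ⋃ s ∈ {s ∈ P.faces | ¬u ⊆ s}, convexHull ℝ (s : Set (Fin n → ℝ)) := by
  ext x
  simp only [mem_sdiff, mem_iUnion₂, mem_ofPred_eq, exists_prop, and_assoc]
  constructor
  · rintro ⟨hx, hxu⟩
    obtain ⟨s, hs, hxs⟩ := exists_face_mem_openSimplex hx
    exact ⟨s, hs, mt (mem_openFaceStar_iff_subset hs hxs).2 hxu,
      openSimplex_subset_convexHull s hxs⟩
  · rintro ⟨s, hs, hus, hxs⟩
    refine ⟨SimplicialComplex.convexHull_subset_space hs hxs, fun hxu ↦ hus ?_⟩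
    obtain ⟨s', hs', hus', hxs'⟩ := mem_openFaceStar.1 hxu
    exact hus'.trans ((mem_convexHull_iff_subset_of_mem_openSimplex hs' hs hxs').1 hxs)

theorem isOpen_preimage_openFaceStar
    (hP : LocallyFinite fun s : P.faces ↦
      ((↑) ⁻¹' convexHull ℝ (s.1 : Set (Fin n → ℝ)) : Set P.space))
    (u : Finset (Fin n → ℝ)) : IsOpen ((↑) ⁻¹' openFaceStar P u : Set P.space) := by
  have hcompl : ((↑) ⁻¹' openFaceStar P u : Set P.space)ᶜ =
      ⋃ s : {s : P.faces // ¬u ⊆ s.1}, (↑) ⁻¹' convexHull ℝ (s.1.1 : Set (Fin n → ℝ)) := by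
    ext x
    have hx := Set.ext_iff.1 (space_diff_openFaceStar P u) x
    simpa [and_assoc, and_left_comm] using hx
  rw [← isClosed_compl_iff, hcompl]
  refine (hP.comp_injective Subtype.val_injective).isClosed_iUnion fun s ↦ ?_
  exact (s.1.1.finite_toSet.isClosed_convexHull ℝ).preimage continuous_subtype_val

theorem exists_iInter_openFaceStar_eq {ι : Type*} {u : ι → Finset (Fin n → ℝ)}
    (hu : ∃ i, (u i).Nonempty) (hne : (⋂ i, openFaceStar P (u i)).Nonempty) :
    ∃ v ∈ P.faces, ⋂ i, openFaceStar P (u i) = openFaceStar P v := by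
  classical
  obtain ⟨p, hp⟩ := hne
  obtain ⟨i₀, a, ha⟩ := hu
  obtain ⟨s, hs, hps⟩ :=
    exists_face_mem_openSimplex (openFaceStar_subset_space (mem_iInter.1 hp i₀))
  have hus (i : ι) : u i ⊆ s := (mem_openFaceStar_iff_subset hs hps).1 (mem_iInter.1 hp i)
  let v := s.filter fun b ↦ ∃ i, b ∈ u i
  have hv_subset (s' : Finset (Fin n → ℝ)) : v ⊆ s' ↔ ∀ i, u i ⊆ s' := by grind
  have hv : v ∈ P.faces :=
    P.down_closed hs (Finset.filter_subset _ _) ⟨a, (hv_subset v).1 Subset.rfl i₀ ha⟩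
  refine ⟨v, hv, Set.ext fun q ↦ ⟨fun hq ↦ ?_, fun hq ↦ mem_iInter.2 fun i ↦ ?_⟩⟩
  · obtain ⟨s', hs', hqs'⟩ :=
      exists_face_mem_openSimplex (openFaceStar_subset_space (mem_iInter.1 hq i₀))
    exact (mem_openFaceStar_iff_subset hs' hqs').2 <| (hv_subset s').2 fun i ↦
      (mem_openFaceStar_iff_subset hs' hqs').1 (mem_iInter.1 hq i)
  · obtain ⟨s', hs', hvs', hqs'⟩ := mem_openFaceStar.1 hq
    exact mem_openFaceStar.2 ⟨s', hs', (hv_subset s').1 hvs' i, hqs'⟩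

end OpenFaceStar

section OpenStar

variable {n : ℕ} {P : SimplicialComplex ℝ (Fin n → ℝ)} {x : Fin n → ℝ}

theorem mem_openStar_self (hx : x ∈ P.space) : x ∈ openStar P x := by
  obtain ⟨u, hu, hxu⟩ := exists_face_mem_openSimplex hx
  rw [openStar_eq_openFaceStar hu hxu]
  exact mem_openFaceStar.2 ⟨u, hu, Subset.rfl, hxu⟩

theorem mem_space_of_openStar_nonempty (h : (openStar P x).Nonempty) : x ∈ P.space := by
  obtain ⟨_, hq⟩ := h
  obtain ⟨s, ⟨hs, hxs⟩, _⟩ := mem_iUnion₂.1 hq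
  exact SimplicialComplex.convexHull_subset_space hs hxs

theorem finite_openStars_inter_nonempty {V : Set (Fin n → ℝ)}
    (hV : {s ∈ P.faces | (convexHull ℝ (s : Set (Fin n → ℝ)) ∩ V).Nonempty}.Finite) :
    {S | (∃ x ∈ P.space, S = openStar P x) ∧ (S ∩ V).Nonempty}.Finite := by
  refine ((hV.biUnion fun s _ ↦ s.powerset.finite_toSet).image (openFaceStar P)).subset ?_
  rintro _ ⟨⟨x, hx, rfl⟩, q, hqx, hqV⟩
  obtain ⟨u, hu, hxu⟩ := exists_face_mem_openSimplex hx
  rw [openStar_eq_openFaceStar hu hxu] at hqx ⊢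
  obtain ⟨s, hs, hus, hqs⟩ := mem_openFaceStar.1 hqx
  exact mem_image_of_mem _ <| mem_biUnion
    (show s ∈ _ from ⟨hs, q, openSimplex_subset_convexHull s hqs, hqV⟩) (Finset.mem_powerset.2 hus)

theorem contractibleSpace_biInter_openStar {T : Set (Fin n → ℝ)} (hT : T.Nonempty)
    (hne : (⋂ x ∈ T, openStar P x).Nonempty) : ContractibleSpace ↥(⋂ x ∈ T, openStar P x) := by
  have hspace : ∀ x ∈ T, x ∈ P.space := fun x hx ↦
    mem_space_of_openStar_nonempty (hne.mono (biInter_subset_of_mem hx))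
  choose c hc hxc using fun x : T ↦ exists_face_mem_openSimplex (hspace x x.2)
  have hstars : ⋂ x ∈ T, openStar P x = ⋂ x : T, openFaceStar P (c x) := by
    rw [biInter_eq_iInter]
    exact iInter_congr fun x ↦ openStar_eq_openFaceStar (hc x) (hxc x)
  rw [hstars] at hne ⊢
  obtain ⟨v, hv, hv_eq⟩ := exists_iInter_openFaceStar_eq
    ⟨⟨_, hT.some_mem⟩, SimplicialComplex.nonempty_of_mem_faces (hc _)⟩ hne
  rw [hv_eq]
  exact contractibleSpace_openFaceStar hv

theorem isOpen_preimage_openStar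
    (hP : LocallyFinite fun s : P.faces ↦
      ((↑) ⁻¹' convexHull ℝ (s.1 : Set (Fin n → ℝ)) : Set P.space))
    (hx : x ∈ P.space) : IsOpen ((↑) ⁻¹' openStar P x : Set P.space) := by
  obtain ⟨u, hu, hxu⟩ := exists_face_mem_openSimplex hx
  rw [openStar_eq_openFaceStar hu hxu]
  exact isOpen_preimage_openFaceStar hP u

end OpenStar

theorem locallyFinite_preimage_convexHull {n : ℕ} {P : SimplicialComplex ℝ (Fin n → ℝ)}
    (hP : ∀ x ∈ P.space, ∃ V : Set (Fin n → ℝ), IsOpen V ∧ x ∈ V ∧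
      {s ∈ P.faces | (convexHull ℝ (s : Set (Fin n → ℝ)) ∩ V).Nonempty}.Finite) :
    LocallyFinite fun s : P.faces ↦
      ((↑) ⁻¹' convexHull ℝ (s.1 : Set (Fin n → ℝ)) : Set P.space) := by
  rintro ⟨x, hx⟩
  obtain ⟨V, hV_open, hxV, hV_fin⟩ := hP x hx
  refine ⟨(↑) ⁻¹' V, (hV_open.preimage continuous_subtype_val).mem_nhds hxV,
    (hV_fin.preimage Subtype.val_injective.injOn).subset ?_⟩
  rintro s ⟨y, hys, hyV⟩
  exact ⟨s.2, y, hys, hyV⟩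

theorem openStars_good_cover_general
    {n : ℕ} (L : Geometry.SimplicialComplex ℝ (Fin n → ℝ))
    (hlf : ∀ x ∈ L.space, ∃ V : Set (Fin n → ℝ), IsOpen V ∧ x ∈ V ∧
      {s ∈ L.faces | (convexHull ℝ (s : Set (Fin n → ℝ)) ∩ V).Nonempty}.Finite) :
    (∀ x ∈ L.space, x ∈ openStar L x) ∧
    (∀ x ∈ L.space, IsOpen (Subtype.val ⁻¹' openStar L x : Set ↥L.space)) ∧
    (∀ y ∈ L.space, ∃ V : Set (Fin n → ℝ), IsOpen V ∧ y ∈ V ∧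
      {S : Set (Fin n → ℝ) | (∃ x ∈ L.space, S = openStar L x) ∧ (S ∩ V).Nonempty}.Finite) ∧
    (∀ T : Set (Fin n → ℝ), T.Nonempty → (⋂ x ∈ T, openStar L x).Nonempty →
      ContractibleSpace ↥(⋂ x ∈ T, openStar L x)) := by
  refine ⟨fun _ ↦ mem_openStar_self,
    fun _ ↦ isOpen_preimage_openStar (locallyFinite_preimage_convexHull hlf),
    fun y hy ↦ ?_, fun _ ↦ contractibleSpace_biInter_openStar⟩
  obtain ⟨V, hV_open, hyV, hV_fin⟩ := hlf y hy
  exact ⟨V, hV_open, hyV, finite_openStars_inter_nonempty hV_fin⟩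

/-- If `L` is a locally finite simplicial complex in `ℝⁿ`, then the family of
open stars of points of `|L|` is a locally finite good open cover of `|L|`: each open star
is open in `|L|` and contains its center, and every nonempty intersection of finitely many
open stars is contractible. -/
theorem openStars_good_cover
    {n : ℕ} (L : Geometry.SimplicialComplex ℝ (Fin n → ℝ))
    (hlf : ∀ x ∈ L.space, ∃ V : Set (Fin n → ℝ), IsOpen V ∧ x ∈ V ∧
      {s ∈ L.faces | (convexHull ℝ (s : Set (Fin n → ℝ)) ∩ V).Nonempty}.Finite) :
    (∀ x ∈ L.space, x ∈ openStar L x) ∧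
    (∀ x ∈ L.space, IsOpen (Subtype.val ⁻¹' openStar L x : Set ↥L.space)) ∧
    (∀ y ∈ L.space, ∃ V : Set (Fin n → ℝ), IsOpen V ∧ y ∈ V ∧
      {S : Set (Fin n → ℝ) | (∃ x ∈ L.space, S = openStar L x) ∧ (S ∩ V).Nonempty}.Finite) ∧
    (∀ t : Finset (Fin n → ℝ), ↑t ⊆ L.space → t.Nonempty →
      (⋂ x ∈ t, openStar L x).Nonempty →
      ContractibleSpace ↥(⋂ x ∈ t, openStar L x)) := by
  obtain ⟨hself, hopen, hfin, hcontr⟩ := openStars_good_cover_general L hlf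
  exact ⟨hself, hopen, hfin, fun t _ ↦ hcontr t⟩
end
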